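/- arXiv:math-ph/0305046 — 2 statements merged into one kernel-verified Lean document; each statement's English description precedes it below -/
import Mathlib

section
/- Let Ω ⊆ ℝ³ be open and let α(x) = α₁(x₁)e₁ + α₂(x₂)e₂ + α₃(x₃)e₃ with α₁, α₂, α₃ : ℝ → ℂ continuously differentiable, and set v_k := −Dα^{(k)} − α² (k = 0,1,2,3). Given f = f₀ + f₁e₁ + f₂e₂ + f₃e₃ : Ω → ℍ(ℂ), suppose u₀, u₁, u₂, u₃ : Ω → ℂ are twice differentiable scalar functions satisfying −Δu_k + v_k u_k = f_k on Ω. Then the function T_α f := (D − M^α)u = Du − uα, where u = u₀ + u₁e₁ + u₂e₂ + u₃e₃, satisfies D(T_α f) + (T_α f)·α = f on Ω; i.e. T_α is a right inverse for the operator D_α = D + M^α. -/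
noncomputable section

abbrev HC := Quaternion ℂ

def e1 : HC := ⟨0, 1, 0, 0⟩
def e2 : HC := ⟨0, 0, 1, 0⟩
def e3 : HC := ⟨0, 0, 0, 1⟩

def pd (k : Fin 3) (g : (Fin 3 → ℝ) → ℂ) (x : Fin 3 → ℝ) : ℂ :=
  fderiv ℝ g x (Pi.single k 1)

def lap (g : (Fin 3 → ℝ) → ℂ) (x : Fin 3 → ℝ) : ℂ :=
  pd 0 (pd 0 g) x + pd 1 (pd 1 g) x + pd 2 (pd 2 g) x

def pdq (k : Fin 3) (f : (Fin 3 → ℝ) → HC) (x : Fin 3 → ℝ) : HC :=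
  ⟨pd k (fun y => (f y).re) x, pd k (fun y => (f y).imI) x,
   pd k (fun y => (f y).imJ) x, pd k (fun y => (f y).imK) x⟩

def Dq (f : (Fin 3 → ℝ) → HC) (x : Fin 3 → ℝ) : HC :=
  e1 * pdq 0 f x + e2 * pdq 1 f x + e3 * pdq 2 f x

def lapq (f : (Fin 3 → ℝ) → HC) (x : Fin 3 → ℝ) : HC :=
  ⟨lap (fun y => (f y).re) x, lap (fun y => (f y).imI) x,
   lap (fun y => (f y).imJ) x, lap (fun y => (f y).imK) x⟩

def QDiffOn (f : (Fin 3 → ℝ) → HC) (Ω : Set (Fin 3 → ℝ)) : Prop :=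
  DifferentiableOn ℝ (fun y => (f y).re) Ω ∧ DifferentiableOn ℝ (fun y => (f y).imI) Ω ∧
  DifferentiableOn ℝ (fun y => (f y).imJ) Ω ∧ DifferentiableOn ℝ (fun y => (f y).imK) Ω

def QC2On (f : (Fin 3 → ℝ) → HC) (Ω : Set (Fin 3 → ℝ)) : Prop :=
  ContDiffOn ℝ 2 (fun y => (f y).re) Ω ∧ ContDiffOn ℝ 2 (fun y => (f y).imI) Ω ∧
  ContDiffOn ℝ 2 (fun y => (f y).imJ) Ω ∧ ContDiffOn ℝ 2 (fun y => (f y).imK) Ω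


/-- Build a biquaternion from its four complex components. -/
def quat (a b c d : ℂ) : HC := ⟨a, b, c, d⟩

/-- The diagonal purely vectorial function `α(x) = α₁(x₁)e₁ + α₂(x₂)e₂ + α₃(x₃)e₃`. -/
def dal (a1 a2 a3 : ℝ → ℂ) (x : Fin 3 → ℝ) : HC :=
  quat 0 (a1 (x 0)) (a2 (x 1)) (a3 (x 2))

/-- `s = α₁² + α₂² + α₃²` (so that `α² = −s`). -/
def sq3 (a1 a2 a3 : ℝ → ℂ) (x : Fin 3 → ℝ) : ℂ :=
  a1 (x 0) ^ 2 + a2 (x 1) ^ 2 + a3 (x 2) ^ 2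

/-- The scalar potentials `v_k = −Dα^{(k)} − α²`, written explicitly. -/
def vpot (a1 a2 a3 : ℝ → ℂ) : Fin 4 → (Fin 3 → ℝ) → ℂ :=
  ![fun x => deriv a1 (x 0) + deriv a2 (x 1) + deriv a3 (x 2) + sq3 a1 a2 a3 x,
    fun x => deriv a1 (x 0) - deriv a2 (x 1) - deriv a3 (x 2) + sq3 a1 a2 a3 x,
    fun x => -deriv a1 (x 0) + deriv a2 (x 1) - deriv a3 (x 2) + sq3 a1 a2 a3 x,
    fun x => -deriv a1 (x 0) - deriv a2 (x 1) + deriv a3 (x 2) + sq3 a1 a2 a3 x]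

/-- The scalar potentials `w_k = Dα^{(k)} − α²`, written explicitly. -/
def wpot (a1 a2 a3 : ℝ → ℂ) : Fin 4 → (Fin 3 → ℝ) → ℂ :=
  ![fun x => -(deriv a1 (x 0) + deriv a2 (x 1) + deriv a3 (x 2)) + sq3 a1 a2 a3 x,
    fun x => -deriv a1 (x 0) + deriv a2 (x 1) + deriv a3 (x 2) + sq3 a1 a2 a3 x,
    fun x => deriv a1 (x 0) - deriv a2 (x 1) + deriv a3 (x 2) + sq3 a1 a2 a3 x,
    fun x => deriv a1 (x 0) + deriv a2 (x 1) - deriv a3 (x 2) + sq3 a1 a2 a3 x]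

/-- The `k`-th complex component of a biquaternion. -/
def qc (k : Fin 4) (q : HC) : ℂ := ![q.re, q.imI, q.imJ, q.imK] k

theorem quat_mul (a b c d aa bb cc dd : ℂ) : quat a b c d * quat aa bb cc dd =
    quat (a * aa - b * bb - c * cc - d * dd) (a * bb + b * aa + c * dd - d * cc)
      (a * cc - b * dd + c * aa + d * bb) (a * dd + b * cc - c * bb + d * aa) := by
  ext
  · exact Quaternion.re_mul _ _
  · exact Quaternion.imI_mul _ _
  · exact Quaternion.imJ_mul _ _
  · exact Quaternion.imK_mul _ _

theorem quat_add (a b c d aa bb cc dd : ℂ) : quat a b c d + quat aa bb cc dd =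
    quat (a + aa) (b + bb) (c + cc) (d + dd) := rfl

theorem quat_sub (a b c d aa bb cc dd : ℂ) : quat a b c d - quat aa bb cc dd =
    quat (a - aa) (b - bb) (c - cc) (d - dd) := rfl

theorem quat_congr {a b c d aa bb cc dd : ℂ} (h1 : a = aa) (h2 : b = bb) (h3 : c = cc)
    (h4 : d = dd) : quat a b c d = quat aa bb cc dd := by
  rw [h1, h2, h3, h4]

theorem Dq_quat (g0 g1 g2 g3 : (Fin 3 → ℝ) → ℂ) (x : Fin 3 → ℝ) :
    Dq (fun y => quat (g0 y) (g1 y) (g2 y) (g3 y)) x = quat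
      (-(pd 0 g1 x + pd 1 g2 x + pd 2 g3 x))
      (pd 0 g0 x + pd 1 g3 x - pd 2 g2 x)
      (pd 1 g0 x + pd 2 g1 x - pd 0 g3 x)
      (pd 2 g0 x + pd 0 g2 x - pd 1 g1 x) := by
  have h : ∀ k, pdq k (fun y => quat (g0 y) (g1 y) (g2 y) (g3 y)) x =
      quat (pd k g0 x) (pd k g1 x) (pd k g2 x) (pd k g3 x) := fun k => rfl
  have h1 : e1 = quat 0 1 0 0 := rfl
  have h2 : e2 = quat 0 0 1 0 := rfl
  have h3 : e3 = quat 0 0 0 1 := rfl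
  unfold Dq
  rw [h, h, h, h1, h2, h3]
  simp only [quat_mul, quat_add]
  apply quat_congr <;> ring

theorem pd_add_fn {k : Fin 3} {f g : (Fin 3 → ℝ) → ℂ} {x : Fin 3 → ℝ}
    (hf : DifferentiableAt ℝ f x) (hg : DifferentiableAt ℝ g x) :
    pd k (fun y => f y + g y) x = pd k f x + pd k g x := by
  unfold pd; rw [fderiv_fun_add hf hg]; rfl

theorem pd_sub_fn {k : Fin 3} {f g : (Fin 3 → ℝ) → ℂ} {x : Fin 3 → ℝ}
    (hf : DifferentiableAt ℝ f x) (hg : DifferentiableAt ℝ g x) :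
    pd k (fun y => f y - g y) x = pd k f x - pd k g x := by
  unfold pd; rw [fderiv_fun_sub hf hg]; rfl

theorem pd_mul_fn {k : Fin 3} {f g : (Fin 3 → ℝ) → ℂ} {x : Fin 3 → ℝ}
    (hf : DifferentiableAt ℝ f x) (hg : DifferentiableAt ℝ g x) :
    pd k (fun y => f y * g y) x = f x * pd k g x + pd k f x * g x := by
  unfold pd; rw [fderiv_fun_mul hf hg]; simp [mul_comm]

theorem pd_coord {k j : Fin 3} {a : ℝ → ℂ} {x : Fin 3 → ℝ} (ha : ContDiff ℝ 1 a) :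
    pd k (fun y => a (y j)) x = if j = k then deriv a (x j) else 0 := by
  unfold pd
  have h1 : HasDerivAt a (deriv a (x j)) (x j) :=
    ((ha.differentiable (by norm_num)) (x j)).hasDerivAt
  have h2 : HasFDerivAt (fun y : Fin 3 → ℝ => y j)
      (ContinuousLinearMap.proj j : (Fin 3 → ℝ) →L[ℝ] ℝ) x := hasFDerivAt_apply j x
  have h3 := h1.hasFDerivAt.comp x h2
  have h4 : fderiv ℝ (fun y : Fin 3 → ℝ => a (y j)) x = _ := h3.fderiv
  rw [h4]
  by_cases h : j = k
  · subst h; simp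
  · simp [h]

theorem diff_coord {j : Fin 3} {a : ℝ → ℂ} {x : Fin 3 → ℝ} (ha : ContDiff ℝ 1 a) :
    DifferentiableAt ℝ (fun y : Fin 3 → ℝ => a (y j)) x := by
  have h1 : Differentiable ℝ a := ha.differentiable (by norm_num)
  fun_prop

theorem diff_u {Ω : Set (Fin 3 → ℝ)} (hΩ : IsOpen Ω) {u : (Fin 3 → ℝ) → ℂ}
    (hu : ContDiffOn ℝ 2 u Ω) {x : Fin 3 → ℝ} (hx : x ∈ Ω) :
    DifferentiableAt ℝ u x :=
  (hu.contDiffAt (hΩ.mem_nhds hx)).differentiableAt (by norm_num)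

theorem diff_fderiv {Ω : Set (Fin 3 → ℝ)} (hΩ : IsOpen Ω) {u : (Fin 3 → ℝ) → ℂ}
    (hu : ContDiffOn ℝ 2 u Ω) {x : Fin 3 → ℝ} (hx : x ∈ Ω) :
    DifferentiableAt ℝ (fderiv ℝ u) x :=
  ((hu.contDiffAt (hΩ.mem_nhds hx)).fderiv_right (m := 1) (by norm_num)).differentiableAt
    (by norm_num)

theorem diff_pd {Ω : Set (Fin 3 → ℝ)} (hΩ : IsOpen Ω) {u : (Fin 3 → ℝ) → ℂ}
    (hu : ContDiffOn ℝ 2 u Ω) {x : Fin 3 → ℝ} (hx : x ∈ Ω) (k : Fin 3) :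
    DifferentiableAt ℝ (fun y => pd k u y) x :=
  (diff_fderiv hΩ hu hx).clm_apply (differentiableAt_const _)

theorem pd_comm {Ω : Set (Fin 3 → ℝ)} (hΩ : IsOpen Ω) {u : (Fin 3 → ℝ) → ℂ}
    (hu : ContDiffOn ℝ 2 u Ω) {x : Fin 3 → ℝ} (hx : x ∈ Ω) (j k : Fin 3) :
    pd j (fun y => pd k u y) x = pd k (fun y => pd j u y) x := by
  have key : ∀ j k : Fin 3, pd j (fun y => pd k u y) x =
      fderiv ℝ (fderiv ℝ u) x (Pi.single j 1) (Pi.single k 1) := by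
    intro j k
    unfold pd
    rw [fderiv_clm_apply (diff_fderiv hΩ hu hx) (differentiableAt_const _)]
    simp
  rw [key, key]
  have := (hu.contDiffAt (hΩ.mem_nhds hx)).isSymmSndFDerivAt (by simp)
  exact this _ _

/-- final Proposition of Subsection 4.1: if `u_k` solve the
inhomogeneous Schrödinger equations `−Δu_k + v_k u_k = f_k`, then `T_α f := (D − M^α)u`
satisfies `D(T_α f) + (T_α f)·α = f`, i.e. `T_α` is a right inverse of `D_α = D + M^α`. -/
theorem right_inverse_of_D_alpha
    (Ω : Set (Fin 3 → ℝ)) (hΩ : IsOpen Ω)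
    (a1 a2 a3 : ℝ → ℂ)
    (ha1 : ContDiff ℝ 1 a1) (ha2 : ContDiff ℝ 1 a2) (ha3 : ContDiff ℝ 1 a3)
    (f0 f1 f2 f3 : (Fin 3 → ℝ) → ℂ)
    (u0 u1 u2 u3 : (Fin 3 → ℝ) → ℂ)
    (hu0 : ContDiffOn ℝ 2 u0 Ω) (hu1 : ContDiffOn ℝ 2 u1 Ω)
    (hu2 : ContDiffOn ℝ 2 u2 Ω) (hu3 : ContDiffOn ℝ 2 u3 Ω)
    (heq0 : ∀ x ∈ Ω, -lap u0 x + vpot a1 a2 a3 0 x * u0 x = f0 x)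
    (heq1 : ∀ x ∈ Ω, -lap u1 x + vpot a1 a2 a3 1 x * u1 x = f1 x)
    (heq2 : ∀ x ∈ Ω, -lap u2 x + vpot a1 a2 a3 2 x * u2 x = f2 x)
    (heq3 : ∀ x ∈ Ω, -lap u3 x + vpot a1 a2 a3 3 x * u3 x = f3 x) :
    (let u : (Fin 3 → ℝ) → HC := fun y => quat (u0 y) (u1 y) (u2 y) (u3 y)
     let Tf : (Fin 3 → ℝ) → HC := fun y => Dq u y - u y * dal a1 a2 a3 y
     ∀ x ∈ Ω, Dq Tf x + Tf x * dal a1 a2 a3 x = quat (f0 x) (f1 x) (f2 x) (f3 x)) := by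
  intro u Tf x hx
  have hTf : ∀ y, Tf y = quat
      ((u1 y * a1 (y 0) + u2 y * a2 (y 1) + u3 y * a3 (y 2))
        - (pd 0 u1 y + pd 1 u2 y + pd 2 u3 y))
      (pd 0 u0 y + pd 1 u3 y - pd 2 u2 y
        - (u0 y * a1 (y 0) + u2 y * a3 (y 2) - u3 y * a2 (y 1)))
      (pd 1 u0 y + pd 2 u1 y - pd 0 u3 y
        - (u0 y * a2 (y 1) + u3 y * a1 (y 0) - u1 y * a3 (y 2)))
      (pd 2 u0 y + pd 0 u2 y - pd 1 u1 y
        - (u0 y * a3 (y 2) + u1 y * a2 (y 1) - u2 y * a1 (y 0))) := by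
    intro y
    simp only [Tf, u, Dq_quat, dal, quat_mul, quat_sub]
    apply quat_congr <;> ring
  clear_value Tf u
  have hTf_fn := funext hTf
  subst hTf_fn
  have A1 := diff_coord (j := 0) (x := x) ha1
  have A2 := diff_coord (j := 1) (x := x) ha2
  have A3 := diff_coord (j := 2) (x := x) ha3
  have D0 := diff_u hΩ hu0 hx
  have D1 := diff_u hΩ hu1 hx
  have D2 := diff_u hΩ hu2 hx
  have D3 := diff_u hΩ hu3 hx
  have P0 := diff_pd hΩ hu0 hx
  have P1 := diff_pd hΩ hu1 hx
  have P2 := diff_pd hΩ hu2 hx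
  have P3 := diff_pd hΩ hu3 hx
  have C00 := pd_comm hΩ hu0 hx 1 0
  have C01 := pd_comm hΩ hu0 hx 2 0
  have C02 := pd_comm hΩ hu0 hx 2 1
  have C10 := pd_comm hΩ hu1 hx 1 0
  have C11 := pd_comm hΩ hu1 hx 2 0
  have C12 := pd_comm hΩ hu1 hx 2 1
  have C20 := pd_comm hΩ hu2 hx 1 0
  have C21 := pd_comm hΩ hu2 hx 2 0
  have C22 := pd_comm hΩ hu2 hx 2 1
  have C30 := pd_comm hΩ hu3 hx 1 0
  have C31 := pd_comm hΩ hu3 hx 2 0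
  have C32 := pd_comm hΩ hu3 hx 2 1
  have E0 := heq0 x hx
  have E1 := heq1 x hx
  have E2 := heq2 x hx
  have E3 := heq3 x hx
  simp only [vpot, lap, sq3, Matrix.cons_val] at E0 E1 E2 E3
  simp only [← E0, ← E1, ← E2, ← E3]
  rw [Dq_quat]
  simp only [dal, quat_mul, quat_add]
  simp (disch := repeat' (with_reducible first
      | assumption | apply P0 | apply P1 | apply P2 | apply P3
      | apply DifferentiableAt.fun_add | apply DifferentiableAt.fun_sub
      | apply DifferentiableAt.fun_mul)) only [pd_add_fn, pd_sub_fn, pd_mul_fn, pd_coord ha1,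
    pd_coord ha2, pd_coord ha3, C00, C01, C02, C10, C11, C12, C20, C21, C22, C30, C31, C32]
  simp only [Fin.isValue, Fin.reduceEq, if_true, if_false]
  apply quat_congr <;> ring
end
end

section
/- Let Ω ⊆ ℝ³ be open, let α₁ : Ω → ℂ be continuously differentiable, let α₂, α₃ ∈ ℂ be constants, and set α(x) = α₁(x)e₁ + α₂e₂ + α₃e₃ and ∇α₁ = (∂₁α₁)e₁ + (∂₂α₁)e₂ + (∂₃α₁)e₃. Suppose v, w : Ω → ℍ(ℂ) are twice differentiable and satisfy the Schrödinger equations with quaternionic potentials −Δv − α²v + i(∇α₁)·v = 0 and −Δw − α²w − i(∇α₁)·w = 0 on Ω (quaternionic multiplication of ∇α₁ on the left). Then the function f := Du − uα, where u := ½ v(1 + ie₁) + ½ w(1 − ie₁), satisfies Df + fα = 0 on Ω. -/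
set_option linter.all false

noncomputable section

theorem e1_re_aux : e1.re = 0 := rfl
theorem e1_imI_aux : e1.imI = 1 := rfl
theorem e1_imJ_aux : e1.imJ = 0 := rfl
theorem e1_imK_aux : e1.imK = 0 := rfl
theorem e2_re_aux : e2.re = 0 := rfl
theorem e2_imI_aux : e2.imI = 0 := rfl
theorem e2_imJ_aux : e2.imJ = 1 := rfl
theorem e2_imK_aux : e2.imK = 0 := rfl
theorem e3_re_aux : e3.re = 0 := rfl
theorem e3_imI_aux : e3.imI = 0 := rfl
theorem e3_imJ_aux : e3.imJ = 0 := rfl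
theorem e3_imK_aux : e3.imK = 1 := rfl
theorem quat_re_aux (a b c d : ℂ) : (quat a b c d).re = a := rfl
theorem pdq_re_aux (k : Fin 3) (f : (Fin 3 → ℝ) → HC) (x : Fin 3 → ℝ) :
    (pdq k f x).re = pd k (fun y => (f y).re) x := rfl
theorem lapq_re_aux (f : (Fin 3 → ℝ) → HC) (x : Fin 3 → ℝ) :
    (lapq f x).re = lap (fun y => (f y).re) x := rfl
theorem quat_imI_aux (a b c d : ℂ) : (quat a b c d).imI = b := rfl
theorem pdq_imI_aux (k : Fin 3) (f : (Fin 3 → ℝ) → HC) (x : Fin 3 → ℝ) :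
    (pdq k f x).imI = pd k (fun y => (f y).imI) x := rfl
theorem lapq_imI_aux (f : (Fin 3 → ℝ) → HC) (x : Fin 3 → ℝ) :
    (lapq f x).imI = lap (fun y => (f y).imI) x := rfl
theorem quat_imJ_aux (a b c d : ℂ) : (quat a b c d).imJ = c := rfl
theorem pdq_imJ_aux (k : Fin 3) (f : (Fin 3 → ℝ) → HC) (x : Fin 3 → ℝ) :
    (pdq k f x).imJ = pd k (fun y => (f y).imJ) x := rfl
theorem lapq_imJ_aux (f : (Fin 3 → ℝ) → HC) (x : Fin 3 → ℝ) :
    (lapq f x).imJ = lap (fun y => (f y).imJ) x := rfl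
theorem quat_imK_aux (a b c d : ℂ) : (quat a b c d).imK = d := rfl
theorem pdq_imK_aux (k : Fin 3) (f : (Fin 3 → ℝ) → HC) (x : Fin 3 → ℝ) :
    (pdq k f x).imK = pd k (fun y => (f y).imK) x := rfl
theorem lapq_imK_aux (f : (Fin 3 → ℝ) → HC) (x : Fin 3 → ℝ) :
    (lapq f x).imK = lap (fun y => (f y).imK) x := rfl

theorem pd_add_aux (k : Fin 3) (g h : (Fin 3 → ℝ) → ℂ) (x : Fin 3 → ℝ)
    (hg : DifferentiableAt ℝ g x) (hh : DifferentiableAt ℝ h x) :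
    pd k (fun y => g y + h y) x = pd k g x + pd k h x := by
  unfold pd
  rw [fderiv_fun_add hg hh]; rfl

theorem pd_sub_aux (k : Fin 3) (g h : (Fin 3 → ℝ) → ℂ) (x : Fin 3 → ℝ)
    (hg : DifferentiableAt ℝ g x) (hh : DifferentiableAt ℝ h x) :
    pd k (fun y => g y - h y) x = pd k g x - pd k h x := by
  unfold pd
  rw [fderiv_fun_sub hg hh]; rfl

theorem pd_mul_aux (k : Fin 3) (g h : (Fin 3 → ℝ) → ℂ) (x : Fin 3 → ℝ)
    (hg : DifferentiableAt ℝ g x) (hh : DifferentiableAt ℝ h x) :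
    pd k (fun y => g y * h y) x = g x * pd k h x + h x * pd k g x := by
  unfold pd
  rw [fderiv_fun_mul hg hh]; rfl

theorem pd_neg_aux (k : Fin 3) (g : (Fin 3 → ℝ) → ℂ) (x : Fin 3 → ℝ) :
    pd k (fun y => -g y) x = -pd k g x := by
  unfold pd
  rw [fderiv_fun_neg]; rfl

theorem pd_const_aux (k : Fin 3) (c : ℂ) (x : Fin 3 → ℝ) :
    pd k (fun _ => c) x = 0 := by
  unfold pd
  simp

theorem pd_cmul_aux (k : Fin 3) (c : ℂ) (g : (Fin 3 → ℝ) → ℂ) (x : Fin 3 → ℝ)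
    (hg : DifferentiableAt ℝ g x) :
    pd k (fun y => c * g y) x = c * pd k g x := by
  rw [pd_mul_aux k _ _ x (by fun_prop) hg, pd_const_aux]; ring

theorem pd_congr_aux (k : Fin 3) {Ω : Set (Fin 3 → ℝ)} (hΩ : IsOpen Ω)
    {g h : (Fin 3 → ℝ) → ℂ} (he : ∀ y ∈ Ω, g y = h y) {x : Fin 3 → ℝ} (hx : x ∈ Ω) :
    pd k g x = pd k h x := by
  unfold pd
  have : g =ᶠ[nhds x] h := by
    filter_upwards [hΩ.mem_nhds hx] with y hy using he y hy
  rw [this.fderiv_eq]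

theorem diffAt_of {Ω : Set (Fin 3 → ℝ)} (hΩ : IsOpen Ω) {n : WithTop ℕ∞} (hn : n ≠ 0)
    {g : (Fin 3 → ℝ) → ℂ} (hg : ContDiffOn ℝ n g Ω) {x : Fin 3 → ℝ} (hx : x ∈ Ω) :
    DifferentiableAt ℝ g x :=
  (hg.contDiffAt (hΩ.mem_nhds hx)).differentiableAt hn

theorem fderiv_diffAt {Ω : Set (Fin 3 → ℝ)} (hΩ : IsOpen Ω)
    {g : (Fin 3 → ℝ) → ℂ} (hg : ContDiffOn ℝ 2 g Ω) {x : Fin 3 → ℝ} (hx : x ∈ Ω) :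
    DifferentiableAt ℝ (fderiv ℝ g) x :=
  ((hg.contDiffAt (hΩ.mem_nhds hx)).fderiv_right (m := 1) (by norm_num)).differentiableAt
    (by norm_num)

theorem pd_diffAt {Ω : Set (Fin 3 → ℝ)} (hΩ : IsOpen Ω) (k : Fin 3)
    {g : (Fin 3 → ℝ) → ℂ} (hg : ContDiffOn ℝ 2 g Ω) {x : Fin 3 → ℝ} (hx : x ∈ Ω) :
    DifferentiableAt ℝ (pd k g) x := by
  have := fderiv_diffAt hΩ hg hx
  unfold pd
  fun_prop

theorem pd_pd {Ω : Set (Fin 3 → ℝ)} (hΩ : IsOpen Ω) (j k : Fin 3)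
    {g : (Fin 3 → ℝ) → ℂ} (hg : ContDiffOn ℝ 2 g Ω) {x : Fin 3 → ℝ} (hx : x ∈ Ω) :
    pd j (pd k g) x = fderiv ℝ (fderiv ℝ g) x (Pi.single j 1) (Pi.single k 1) := by
  have := fderiv_diffAt hΩ hg hx
  conv_lhs => unfold pd
  rw [fderiv_clm_apply this (by fun_prop)]
  simp

theorem pd_symm {Ω : Set (Fin 3 → ℝ)} (hΩ : IsOpen Ω) (j k : Fin 3)
    {g : (Fin 3 → ℝ) → ℂ} (hg : ContDiffOn ℝ 2 g Ω) {x : Fin 3 → ℝ} (hx : x ∈ Ω) :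
    pd j (pd k g) x = pd k (pd j g) x := by
  rw [pd_pd hΩ j k hg hx, pd_pd hΩ k j hg hx]
  exact ((hg.contDiffAt (hΩ.mem_nhds hx)).isSymmSndFDerivAt (by simp)) _ _

theorem lap_lin4 {Ω : Set (Fin 3 → ℝ)} (hΩ : IsOpen Ω) (a b c d : ℂ)
    {p q r s : (Fin 3 → ℝ) → ℂ} (hp : ContDiffOn ℝ 2 p Ω) (hq : ContDiffOn ℝ 2 q Ω)
    (hr : ContDiffOn ℝ 2 r Ω) (hs : ContDiffOn ℝ 2 s Ω)
    {x : Fin 3 → ℝ} (hx : x ∈ Ω) :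
    lap (fun y => a * p y + b * q y + c * r y + d * s y) x
      = a * lap p x + b * lap q x + c * lap r x + d * lap s x := by
  have key : ∀ (k : Fin 3) (p q r s : (Fin 3 → ℝ) → ℂ) (y : Fin 3 → ℝ),
      DifferentiableAt ℝ p y → DifferentiableAt ℝ q y → DifferentiableAt ℝ r y →
      DifferentiableAt ℝ s y →
      pd k (fun y => a * p y + b * q y + c * r y + d * s y) y
        = a * pd k p y + b * pd k q y + c * pd k r y + d * pd k s y := by
    intro k p q r s y h1 h2 h3 h4
    rw [pd_add_aux k _ _ y (by fun_prop) (by fun_prop), pd_add_aux k _ _ y (by fun_prop) (by fun_prop),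
      pd_add_aux k _ _ y (by fun_prop) (by fun_prop), pd_cmul_aux k a p y h1, pd_cmul_aux k b q y h2,
      pd_cmul_aux k c r y h3, pd_cmul_aux k d s y h4]
  have two : (2 : WithTop ℕ∞) ≠ 0 := by norm_num
  have key2 : ∀ k : Fin 3, pd k (pd k (fun y => a * p y + b * q y + c * r y + d * s y)) x
      = a * pd k (pd k p) x + b * pd k (pd k q) x + c * pd k (pd k r) x
        + d * pd k (pd k s) x := by
    intro k
    rw [pd_congr_aux k hΩ (fun y hy => key k p q r s y (diffAt_of hΩ two hp hy)
      (diffAt_of hΩ two hq hy) (diffAt_of hΩ two hr hy) (diffAt_of hΩ two hs hy)) hx]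
    exact key k _ _ _ _ x (pd_diffAt hΩ k hp hx) (pd_diffAt hΩ k hq hx) (pd_diffAt hΩ k hr hx)
      (pd_diffAt hΩ k hs hx)
  unfold lap
  rw [key2 0, key2 1, key2 2]
  ring

theorem factor_step
    (Ω : Set (Fin 3 → ℝ)) (hΩ : IsOpen Ω)
    (a1 : (Fin 3 → ℝ) → ℂ) (ha1 : ContDiffOn ℝ 1 a1 Ω) (a2 a3 : ℂ)
    (U0 U1 U2 U3 : (Fin 3 → ℝ) → ℂ)
    (h0 : ContDiffOn ℝ 2 U0 Ω) (h1 : ContDiffOn ℝ 2 U1 Ω)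
    (h2 : ContDiffOn ℝ 2 U2 Ω) (h3 : ContDiffOn ℝ 2 U3 Ω)
    (x : Fin 3 → ℝ) (hx : x ∈ Ω)
    (E0 : -lap U0 x + (a1 x ^ 2 + a2 ^ 2 + a3 ^ 2) * U0 x
      + (pd 0 a1 x * U0 x + pd 1 a1 x * U3 x - pd 2 a1 x * U2 x) = 0)
    (E1 : -lap U1 x + (a1 x ^ 2 + a2 ^ 2 + a3 ^ 2) * U1 x
      + (pd 0 a1 x * U1 x + pd 1 a1 x * U2 x + pd 2 a1 x * U3 x) = 0)
    (E2 : -lap U2 x + (a1 x ^ 2 + a2 ^ 2 + a3 ^ 2) * U2 x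
      + (-(pd 0 a1 x * U2 x) + pd 1 a1 x * U1 x - pd 2 a1 x * U0 x) = 0)
    (E3 : -lap U3 x + (a1 x ^ 2 + a2 ^ 2 + a3 ^ 2) * U3 x
      + (-(pd 0 a1 x * U3 x) + pd 1 a1 x * U0 x + pd 2 a1 x * U1 x) = 0) :
    Dq (fun y => Dq (fun y => quat (U0 y) (U1 y) (U2 y) (U3 y)) y
        - quat (U0 y) (U1 y) (U2 y) (U3 y) * quat 0 (a1 y) a2 a3) x
      + (Dq (fun y => quat (U0 y) (U1 y) (U2 y) (U3 y)) x
        - quat (U0 x) (U1 x) (U2 x) (U3 x) * quat 0 (a1 x) a2 a3) * quat 0 (a1 x) a2 a3 = 0 := by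
  have two : (2 : WithTop ℕ∞) ≠ 0 := by norm_num
  have da := diffAt_of hΩ one_ne_zero ha1 hx
  have d0 := diffAt_of hΩ two h0 hx
  have d1 := diffAt_of hΩ two h1 hx
  have d2 := diffAt_of hΩ two h2 hx
  have d3 := diffAt_of hΩ two h3 hx
  have p0 := fun k => pd_diffAt hΩ k h0 hx
  have p1 := fun k => pd_diffAt hΩ k h1 hx
  have p2 := fun k => pd_diffAt hΩ k h2 hx
  have p3 := fun k => pd_diffAt hΩ k h3 hx
  have s0 := fun j k => pd_symm hΩ j k h0 hx
  have s1 := fun j k => pd_symm hΩ j k h1 hx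
  have s2 := fun j k => pd_symm hΩ j k h2 hx
  have s3 := fun j k => pd_symm hΩ j k h3 hx
  unfold lap at E0 E1 E2 E3
  ext
  all_goals
    simp only [Dq, e1_re_aux, e1_imI_aux, e1_imJ_aux, e1_imK_aux, e2_re_aux, e2_imI_aux, e2_imJ_aux, e2_imK_aux, e3_re_aux, e3_imI_aux,
      e3_imJ_aux, e3_imK_aux, quat_re_aux, pdq_re_aux, quat_imI_aux, pdq_imI_aux, quat_imJ_aux, pdq_imJ_aux,
      quat_imK_aux, pdq_imK_aux,
       Quaternion.re_add, Quaternion.imI_add,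
      Quaternion.imJ_add, Quaternion.imK_add, Quaternion.re_sub, Quaternion.imI_sub,
      Quaternion.imJ_sub, Quaternion.imK_sub, Quaternion.re_mul, Quaternion.imI_mul,
      Quaternion.imJ_mul, Quaternion.imK_mul, Quaternion.re_zero, Quaternion.imI_zero,
      Quaternion.imJ_zero, Quaternion.imK_zero,
      zero_mul, mul_zero, one_mul, zero_add, add_zero, sub_zero, zero_sub]
    simp (disch := fun_prop) only [pd_add_aux, pd_sub_aux, pd_mul_aux, pd_const_aux, pd_neg_aux, mul_zero,
      zero_add, add_zero]
    simp only [s0 1 0, s0 2 0, s0 2 1, s1 1 0, s1 2 0, s1 2 1, s2 1 0, s2 2 0, s2 2 1,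
      s3 1 0, s3 2 0, s3 2 1]
  · linear_combination E0
  · linear_combination E1
  · linear_combination E2
  · linear_combination E3

/-- Proposition of Subsection 4.2: if `v` and `w` solve the Schrödinger
equations with quaternionic potentials `−Δv − α²v + i(∇α₁)v = 0` and
`−Δw − α²w − i(∇α₁)w = 0`, then `f = Du − uα` with `u = Q⁺v + Q⁻w` solves `Df + fα = 0`. -/
theorem solutions_from_quaternionic_schroedinger
    (Ω : Set (Fin 3 → ℝ)) (hΩ : IsOpen Ω)
    (a1 : (Fin 3 → ℝ) → ℂ) (ha1 : ContDiffOn ℝ 1 a1 Ω)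
    (a2 a3 : ℂ)
    (v w : (Fin 3 → ℝ) → HC) (hv : QC2On v Ω) (hw : QC2On w Ω)
    (hveq : ∀ x ∈ Ω,
      -lapq v x - ((-(a1 x ^ 2 + a2 ^ 2 + a3 ^ 2) : ℂ) : HC) * v x +
        (Complex.I : HC) * (quat 0 (pd 0 a1 x) (pd 1 a1 x) (pd 2 a1 x) * v x) = 0)
    (hweq : ∀ x ∈ Ω,
      -lapq w x - ((-(a1 x ^ 2 + a2 ^ 2 + a3 ^ 2) : ℂ) : HC) * w x -
        (Complex.I : HC) * (quat 0 (pd 0 a1 x) (pd 1 a1 x) (pd 2 a1 x) * w x) = 0) :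
    (let α : (Fin 3 → ℝ) → HC := fun y => quat 0 (a1 y) a2 a3
     let u : (Fin 3 → ℝ) → HC := fun y =>
       (2⁻¹ : ℂ) • (v y * (1 + (Complex.I : HC) * e1)) +
       (2⁻¹ : ℂ) • (w y * (1 - (Complex.I : HC) * e1))
     let f : (Fin 3 → ℝ) → HC := fun y => Dq u y - u y * α y
     ∀ x ∈ Ω, Dq f x + f x * α x = 0) := by
  intro α u f x hx
  obtain ⟨v0, v1, v2, v3⟩ := hv
  obtain ⟨w0, w1, w2, w3⟩ := hw
  have hu : u = fun y => quat
      (2⁻¹ * (v y).re + (-(2⁻¹ * Complex.I)) * (v y).imI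
        + 2⁻¹ * (w y).re + (2⁻¹ * Complex.I) * (w y).imI)
      (2⁻¹ * (v y).imI + (2⁻¹ * Complex.I) * (v y).re
        + 2⁻¹ * (w y).imI + (-(2⁻¹ * Complex.I)) * (w y).re)
      (2⁻¹ * (v y).imJ + (2⁻¹ * Complex.I) * (v y).imK
        + 2⁻¹ * (w y).imJ + (-(2⁻¹ * Complex.I)) * (w y).imK)
      (2⁻¹ * (v y).imK + (-(2⁻¹ * Complex.I)) * (v y).imJ
        + 2⁻¹ * (w y).imK + (2⁻¹ * Complex.I) * (w y).imJ) := by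
    funext y
    ext <;> simp [u, Quaternion.re_one, Quaternion.imI_one, Quaternion.imJ_one,
      Quaternion.imK_one, e1_re_aux, e1_imI_aux, e1_imJ_aux, e1_imK_aux, quat_re_aux, quat_imI_aux, quat_imJ_aux, quat_imK_aux] <;> ring
  have V := hveq x hx
  have W := hweq x hx
  generalize hS : -(a1 x ^ 2 + a2 ^ 2 + a3 ^ 2) = S at V W
  have V0 := congrArg (fun q : HC => q.re) V
  have V1 := congrArg (fun q : HC => q.imI) V
  have V2 := congrArg (fun q : HC => q.imJ) V
  have V3 := congrArg (fun q : HC => q.imK) V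
  have W0 := congrArg (fun q : HC => q.re) W
  have W1 := congrArg (fun q : HC => q.imI) W
  have W2 := congrArg (fun q : HC => q.imJ) W
  have W3 := congrArg (fun q : HC => q.imK) W
  simp [Quaternion.re_zero, Quaternion.imI_zero, Quaternion.imJ_zero,
    Quaternion.imK_zero, quat_re_aux, lapq_re_aux, quat_imI_aux, lapq_imI_aux, quat_imJ_aux, lapq_imJ_aux, quat_imK_aux, lapq_imK_aux] at V0 V1 V2 V3 W0 W1 W2 W3
  have I2 := Complex.I_sq
  simp only [f, α, hu]
  apply factor_step Ω hΩ a1 ha1 a2 a3 _ _ _ _ (by fun_prop) (by fun_prop) (by fun_prop)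
    (by fun_prop) x hx
  · rw [lap_lin4 hΩ _ _ _ _ v0 v1 w0 w1 hx]
    linear_combination 2⁻¹ * V0 - 2⁻¹ * Complex.I * V1 + 2⁻¹ * W0
      + 2⁻¹ * Complex.I * W1
      + 2⁻¹ * (pd 0 a1 x * ((v x).re + (w x).re) + pd 1 a1 x * ((v x).imK + (w x).imK) - pd 2 a1 x * ((v x).imJ + (w x).imJ)) * I2
      - 2⁻¹ * ((v x).re + (w x).re - Complex.I * (v x).imI + Complex.I * (w x).imI) * hS
  · rw [lap_lin4 hΩ _ _ _ _ v1 v0 w1 w0 hx]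
    linear_combination 2⁻¹ * V1 + 2⁻¹ * Complex.I * V0 + 2⁻¹ * W1
      - 2⁻¹ * Complex.I * W0
      + 2⁻¹ * (pd 0 a1 x * ((v x).imI + (w x).imI) + pd 1 a1 x * ((v x).imJ + (w x).imJ) + pd 2 a1 x * ((v x).imK + (w x).imK)) * I2
      - 2⁻¹ * ((v x).imI + (w x).imI + Complex.I * (v x).re - Complex.I * (w x).re) * hS
  · rw [lap_lin4 hΩ _ _ _ _ v2 v3 w2 w3 hx]
    linear_combination 2⁻¹ * V2 + 2⁻¹ * Complex.I * V3 + 2⁻¹ * W2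
      - 2⁻¹ * Complex.I * W3
      + 2⁻¹ * (-pd 0 a1 x * ((v x).imJ + (w x).imJ) + pd 1 a1 x * ((v x).imI + (w x).imI) - pd 2 a1 x * ((v x).re + (w x).re)) * I2
      - 2⁻¹ * ((v x).imJ + (w x).imJ + Complex.I * (v x).imK - Complex.I * (w x).imK) * hS
  · rw [lap_lin4 hΩ _ _ _ _ v3 v2 w3 w2 hx]
    linear_combination 2⁻¹ * V3 - 2⁻¹ * Complex.I * V2 + 2⁻¹ * W3
      + 2⁻¹ * Complex.I * W2
      + 2⁻¹ * (-pd 0 a1 x * ((v x).imK + (w x).imK) + pd 1 a1 x * ((v x).re + (w x).re) + pd 2 a1 x * ((v x).imI + (w x).imI)) * I2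
      - 2⁻¹ * ((v x).imK + (w x).imK - Complex.I * (v x).imJ + Complex.I * (w x).imJ) * hS
end
end
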